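/- For every integer w, every integer p1, and every nonnegative integer u, the following identity holds: (−1)^w q^{u²−wu} · ( Σ_{c,e,r ≥ 0, c+e+r=u, w−r even} q^{−u(c+e)+2c+2c·p1} C_q(w,r) C_{q²}((w−r)/2+p1, c) C_{q²}((w−r)/2, e) − Σ_{c,e,r ≥ 0, c+e+r=u, w−r odd} q^{−(u−1)(c+e)+2c·p1} C_q(w,r) C_{q²}(1+(w−r−1)/2+p1, c) C_{q²}((w−r−1)/2, e) ) = q^{2u+2u·p1} C_{q²}(p1,u). -/

import Mathlib

/-!
Put `Q = v²` and group the terms of `G₀₀(w, u; p, 0)` by `r`. Up to the factor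
`(-1)^r v^(-(w-r)r) C_v(w,r)`, the terms with a given `r` add up to the coefficient of `X^(u-r)` in
a product `a (w - r)` of two `Q`-binomial series, and with floors and ceilings the two parities
become one formula for `a`. By the `Q`-Pascal rule `a (n + 1) = a n * (1 + Q^(-n) X)` for every
integer `n`. The Pascal rule for `C_v(w,r)` then makes the whole sum independent of `w` (a quantum
form of `((1 + X) - X)^w = 1`), and at `w = 0` only the term `r = 0` survives.
-/

open Finset

noncomputable section

/-- The field `ℚ(q)` of rational functions over `ℚ`. -/
abbrev F : Type := RatFunc ℚ

/-- The indeterminate `q`. -/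
noncomputable def qq : F := RatFunc.X

/-- The quantum integer `[n]` with base `v`: `(v^n - v^(-n))/(v - v⁻¹)`. -/
noncomputable def qint (v : F) (n : ℤ) : F := (v ^ n - v ^ (-n)) / (v - v⁻¹)

/-- The quantum factorial `[m]! = [1][2]⋯[m]` with base `v`. -/
noncomputable def qfact (v : F) (m : ℕ) : F := ∏ k ∈ range m, qint v ((k : ℤ) + 1)

/-- The quantum binomial coefficient `C_v(n,d) = [n][n-1]⋯[n-d+1]/[d]!` for `d ≥ 0`,
and `0` for `d < 0`. -/
noncomputable def qbinom (v : F) (n d : ℤ) : F :=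
  if d < 0 then 0
  else (∏ k ∈ range d.toNat, qint v (n - (k : ℤ))) / qfact v d.toNat

open PowerSeries

section PowerSeries

variable {R : Type*} [CommSemiring R]

lemma coeff_zero_mul_one_add_C_mul_X (f : R⟦X⟧) (a : R) :
    coeff 0 (f * (1 + C a * X)) = coeff 0 f := by
  simp

lemma coeff_succ_mul_one_add_C_mul_X (f : R⟦X⟧) (a : R) (m : ℕ) :
    coeff (m + 1) (f * (1 + C a * X)) = coeff (m + 1) f + a * coeff m f := by
  rw [mul_add, mul_one, ← mul_assoc, map_add, coeff_succ_mul_X, coeff_mul_C, mul_comm a]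

end PowerSeries

lemma sum_range_sum_range_eq_sum_antidiagonal {M : Type*} [AddCommMonoid M] (u : ℕ)
    (f : ℕ → ℕ → ℕ → M) :
    ∑ c ∈ range (u + 1), ∑ e ∈ range (u + 1 - c), f c e (u - c - e) =
      ∑ x ∈ antidiagonal u, ∑ y ∈ antidiagonal x.2, f y.1 y.2 x.1 := by
  rw [sum_sigma', sum_sigma']
  refine sum_bij' (fun x _ ↦ ⟨(u - x.1 - x.2, x.1 + x.2), (x.1, x.2)⟩)
    (fun x _ ↦ ⟨x.2.1, x.2.2⟩) ?_ ?_ ?_ ?_ ?_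
  · rintro ⟨c, e⟩ h
    simp only [mem_sigma, mem_range, HasAntidiagonal.mem_antidiagonal, and_true] at h ⊢
    omega
  · rintro ⟨⟨r, m⟩, c, e⟩ h
    simp only [mem_sigma, mem_range, HasAntidiagonal.mem_antidiagonal] at h ⊢
    omega
  · simp
  · rintro ⟨⟨r, m⟩, c, e⟩ h
    obtain ⟨rfl, rfl⟩ : r + m = u ∧ c + e = m := by simpa using h
    simp [Nat.sub_sub]
  · simp

lemma zpow_ne_one_of_not_isOfFinOrder {G : Type*} [DivisionMonoid G] {v : G}
    (hv : ¬IsOfFinOrder v) {n : ℤ} (hn : n ≠ 0) : v ^ n ≠ 1 := by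
  intro h
  refine hv (isOfFinOrder_iff_pow_eq_one.2 ⟨n.natAbs, Int.natAbs_pos.2 hn, ?_⟩)
  obtain hn | hn := Int.natAbs_eq n
  · rwa [hn, zpow_natCast] at h
  · rwa [hn, zpow_neg, zpow_natCast, inv_eq_one] at h

section QuantumBinomial

variable {v : F}

lemma zpow_sub_zpow_neg_ne_zero (hv₀ : v ≠ 0) (hv : ¬IsOfFinOrder v) {n : ℤ} (hn : n ≠ 0) :
    v ^ n - v ^ (-n) ≠ 0 := by
  intro h
  refine zpow_ne_one_of_not_isOfFinOrder hv (n := n + n) (by omega) ?_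
  rw [zpow_add₀ hv₀]
  nth_rw 2 [sub_eq_zero.1 h]
  rw [← zpow_add₀ hv₀, add_neg_cancel, zpow_zero]

lemma qint_ne_zero (hv₀ : v ≠ 0) (hv : ¬IsOfFinOrder v) {n : ℤ} (hn : n ≠ 0) : qint v n ≠ 0 :=
  div_ne_zero (zpow_sub_zpow_neg_ne_zero hv₀ hv hn)
    (by simpa using zpow_sub_zpow_neg_ne_zero hv₀ hv one_ne_zero)

@[simp]
lemma qint_zero (v : F) : qint v 0 = 0 := by
  simp [qint]

lemma qint_add_one (hv₀ : v ≠ 0) (n d : ℤ) :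
    qint v (n + 1) = v ^ (d + 1) * qint v (n - d) + v ^ (d - n) * qint v (d + 1) := by
  simp only [qint, mul_div_assoc', ← add_div, mul_sub, ← zpow_add₀ hv₀]
  ring_nf

lemma qfact_succ (v : F) (m : ℕ) : qfact v (m + 1) = qfact v m * qint v (m + 1) :=
  prod_range_succ _ _

lemma qfact_ne_zero (hv₀ : v ≠ 0) (hv : ¬IsOfFinOrder v) (m : ℕ) : qfact v m ≠ 0 :=
  prod_ne_zero_iff.2 fun _ _ ↦ qint_ne_zero hv₀ hv (by omega)

lemma qbinom_natCast (v : F) (n : ℤ) (d : ℕ) :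
    qbinom v n d = (∏ k ∈ range d, qint v (n - k)) / qfact v d := by
  simp [qbinom]

@[simp]
lemma qbinom_zero_right (v : F) (n : ℤ) : qbinom v n 0 = 1 := by
  simp [qbinom, qfact]

lemma qbinom_zero_succ (v : F) (d : ℕ) : qbinom v 0 (d + 1 : ℕ) = 0 := by
  rw [qbinom_natCast, prod_range_succ']
  simp

lemma qbinom_add_one_succ (hv₀ : v ≠ 0) (hv : ¬IsOfFinOrder v) (n : ℤ) (d : ℕ) :
    qbinom v (n + 1) (d + 1 : ℕ) =
      v ^ (d + 1 : ℤ) * qbinom v n (d + 1 : ℕ) + v ^ (d - n) * qbinom v n d := by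
  have hshift : ∏ k ∈ range d, qint v (n + 1 - (k + 1 : ℕ)) = ∏ k ∈ range d, qint v (n - k) :=
    prod_congr rfl fun k _ ↦ by rw [Nat.cast_succ, add_sub_add_right_eq_sub]
  have hfact := qfact_ne_zero hv₀ hv d
  have hint : qint v (d + 1) ≠ 0 := qint_ne_zero hv₀ hv (by omega)
  simp only [qbinom_natCast, qfact_succ]
  rw [prod_range_succ', prod_range_succ (fun k : ℕ ↦ qint v (n - k)), hshift, Nat.cast_zero,
    sub_zero, qint_add_one hv₀ n d]
  field_simp

end QuantumBinomial

section QuantumBinomialSeries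

variable {v : F}

/-- The quantum binomial series `∑ d, C_v(n,d) (y X)^d`; the scale `y` is kept as a parameter
because it changes in the recursion on `n`. -/
def qbinomSeries (v : F) (n : ℤ) (y : F) : F⟦X⟧ := mk fun d ↦ qbinom v n d * y ^ d

@[simp]
lemma coeff_qbinomSeries (v : F) (n : ℤ) (y : F) (d : ℕ) :
    coeff d (qbinomSeries v n y) = qbinom v n d * y ^ d :=
  coeff_mk _ _

@[simp]
lemma qbinomSeries_zero (v y : F) : qbinomSeries v 0 y = 1 := by
  ext d
  cases d with
  | zero => simp
  | succ d => rw [coeff_qbinomSeries, qbinom_zero_succ, zero_mul, coeff_one, if_neg d.succ_ne_zero]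

lemma qbinomSeries_add_one (hv₀ : v ≠ 0) (hv : ¬IsOfFinOrder v) (n : ℤ) (y : F) :
    qbinomSeries v (n + 1) y = qbinomSeries v n (v * y) * (1 + C (y * v ^ (-n)) * X) := by
  ext d
  cases d with
  | zero =>
    rw [coeff_zero_mul_one_add_C_mul_X, coeff_qbinomSeries, coeff_qbinomSeries]
    simp
  | succ d =>
    rw [coeff_succ_mul_one_add_C_mul_X]
    simp only [coeff_qbinomSeries]
    rw [qbinom_add_one_succ hv₀ hv, sub_eq_add_neg, zpow_add₀ hv₀, zpow_add₀ hv₀, zpow_one,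
      zpow_natCast]
    ring

/-- The product of two `v`-binomial series, of indices `⌈n/2⌉ + p` and `⌊n/2⌋`, scaled so that
passing from `n` to `n + 1` multiplies it by `1 + v^(-n) X`. For `v = q²` its coefficients are the
sums over `c` and `e` in `G₀₀`, for both parities of `n = w - r`. -/
def splitSeries (v : F) (p n : ℤ) : F⟦X⟧ :=
  qbinomSeries v ((n + 1) / 2 + p) (v ^ (1 + p - (n + 1) / 2)) *
    qbinomSeries v (n / 2) (v ^ (-(n / 2)))

lemma splitSeries_zero (v : F) (p : ℤ) : splitSeries v p 0 = qbinomSeries v p (v ^ (1 + p)) := by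
  simp [splitSeries]

lemma splitSeries_two_mul (v : F) (p k : ℤ) :
    splitSeries v p (2 * k) =
      qbinomSeries v (k + p) (v ^ (1 + p - k)) * qbinomSeries v k (v ^ (-k)) := by
  rw [splitSeries, show (2 * k + 1) / 2 = k by omega, show 2 * k / 2 = k by omega]

lemma splitSeries_two_mul_add_one (v : F) (p k : ℤ) :
    splitSeries v p (2 * k + 1) =
      qbinomSeries v (k + p + 1) (v ^ (p - k)) * qbinomSeries v k (v ^ (-k)) := by
  rw [splitSeries, show (2 * k + 1 + 1) / 2 = k + 1 by omega, show (2 * k + 1) / 2 = k by omega,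
    add_right_comm, add_comm k 1, add_sub_add_left_eq_sub]

lemma splitSeries_add_one (hv₀ : v ≠ 0) (hv : ¬IsOfFinOrder v) (p n : ℤ) :
    splitSeries v p (n + 1) = splitSeries v p n * (1 + C (v ^ (-n)) * X) := by
  obtain ⟨k, rfl | rfl⟩ := Int.even_or_odd' n
  · rw [splitSeries_two_mul_add_one, splitSeries_two_mul, qbinomSeries_add_one hv₀ hv,
      ← zpow_one_add₀ hv₀, ← zpow_add₀ hv₀, ← add_sub_assoc,
      show p - k + -(k + p) = -(2 * k) by ring]
    ring
  · rw [show 2 * k + 1 + 1 = 2 * (k + 1) by ring, splitSeries_two_mul, splitSeries_two_mul_add_one,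
      qbinomSeries_add_one hv₀ hv k, ← zpow_one_add₀ hv₀, ← zpow_add₀ hv₀,
      show k + 1 + p = k + p + 1 by ring, show 1 + p - (k + 1) = p - k by ring,
      show 1 + -(k + 1) = -k by ring, show -(k + 1) + -k = -(2 * k + 1) by ring]
    ring

end QuantumBinomialSeries

section Inversion

variable {v : F}

/-- The quantum binomial coefficient `C_v(w,r)` with the sign and power of `v` that make it the
weight in quantum binomial inversion. -/
def signedQbinom (v : F) (w : ℤ) (r : ℕ) : F := (-1) ^ r * v ^ (-(w - r) * r) * qbinom v w r

@[simp]
lemma signedQbinom_zero_right (v : F) (w : ℤ) : signedQbinom v w 0 = 1 := by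
  simp [signedQbinom]

@[simp]
lemma signedQbinom_zero_succ (v : F) (r : ℕ) : signedQbinom v 0 (r + 1) = 0 := by
  rw [signedQbinom, qbinom_zero_succ, mul_zero]

lemma signedQbinom_add_one_succ (hv₀ : v ≠ 0) (hv : ¬IsOfFinOrder v) (w : ℤ) (r : ℕ) :
    signedQbinom v (w + 1) (r + 1) =
      signedQbinom v w (r + 1) - (v ^ 2) ^ (-(w - r)) * signedQbinom v w r := by
  have hfst : v ^ (-(w + 1 - (r + 1 : ℕ)) * (r + 1 : ℕ)) * v ^ (r + 1 : ℤ) =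
      v ^ (-(w - (r + 1 : ℕ)) * (r + 1 : ℕ)) := by
    rw [← zpow_add₀ hv₀]
    congr 1
    push_cast
    ring
  have hsnd : v ^ (-(w + 1 - (r + 1 : ℕ)) * (r + 1 : ℕ)) * v ^ (r - w) =
      (v ^ 2) ^ (-(w - r)) * v ^ (-(w - r) * r) := by
    rw [← zpow_natCast v 2, ← zpow_mul, ← zpow_add₀ hv₀, ← zpow_add₀ hv₀]
    congr 1
    push_cast
    ring
  rw [signedQbinom, signedQbinom, signedQbinom, qbinom_add_one_succ hv₀ hv, pow_succ]
  linear_combination (-(-1) ^ r * qbinom v w (r + 1 : ℕ)) * hfst -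
    ((-1) ^ r * qbinom v w r) * hsnd

lemma sum_signedQbinom_mul_coeff_add_one (hv₀ : v ≠ 0) (hv : ¬IsOfFinOrder v) {a : ℤ → F⟦X⟧}
    (ha : ∀ n, a (n + 1) = a n * (1 + C ((v ^ 2) ^ (-n)) * X)) (w : ℤ) (u : ℕ) :
    ∑ x ∈ antidiagonal u, signedQbinom v (w + 1) x.1 * coeff x.2 (a (w + 1 - x.1)) =
      ∑ x ∈ antidiagonal u, signedQbinom v w x.1 * coeff x.2 (a (w - x.1)) := by
  have hcoeff_zero (n : ℤ) : coeff 0 (a (n + 1)) = coeff 0 (a n) := by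
    rw [ha, coeff_zero_mul_one_add_C_mul_X]
  have hcoeff_succ (n : ℤ) (m : ℕ) :
      coeff (m + 1) (a (n + 1)) = coeff (m + 1) (a n) + (v ^ 2) ^ (-n) * coeff m (a n) := by
    rw [ha, coeff_succ_mul_one_add_C_mul_X]
  cases u with
  | zero => simpa using hcoeff_zero w
  | succ u =>
    set S := ∑ x ∈ antidiagonal u,
      signedQbinom v w x.1 * ((v ^ 2) ^ (-(w - x.1)) * coeff x.2 (a (w - x.1))) with hS
    calc ∑ x ∈ antidiagonal (u + 1), signedQbinom v (w + 1) x.1 * coeff x.2 (a (w + 1 - x.1))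
      _ = ∑ x ∈ antidiagonal (u + 1), signedQbinom v w x.1 * coeff x.2 (a (w + 1 - x.1)) - S := by
        rw [Nat.sum_antidiagonal_succ, Nat.sum_antidiagonal_succ, hS, add_sub_assoc (_ * _),
          ← sum_sub_distrib, signedQbinom_zero_right, signedQbinom_zero_right]
        congr 1
        refine sum_congr rfl fun x _ ↦ ?_
        rw [signedQbinom_add_one_succ hv₀ hv, Nat.cast_succ, add_sub_add_right_eq_sub]
        ring
      _ = ∑ x ∈ antidiagonal (u + 1), signedQbinom v w x.1 * coeff x.2 (a (w - x.1)) := by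
        simp only [Nat.sum_antidiagonal_succ', add_sub_right_comm w, hcoeff_zero, hcoeff_succ,
          mul_add, sum_add_distrib, ← hS]
        rw [← add_assoc, add_sub_cancel_right]

lemma sum_signedQbinom_mul_coeff (hv₀ : v ≠ 0) (hv : ¬IsOfFinOrder v) {a : ℤ → F⟦X⟧}
    (ha : ∀ n, a (n + 1) = a n * (1 + C ((v ^ 2) ^ (-n)) * X)) (w : ℤ) (u : ℕ) :
    ∑ x ∈ antidiagonal u, signedQbinom v w x.1 * coeff x.2 (a (w - x.1)) = coeff u (a 0) := by
  induction w using Int.induction_on with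
  | zero => cases u <;> simp [Nat.sum_antidiagonal_succ]
  | succ i ih => rw [sum_signedQbinom_mul_coeff_add_one hv₀ hv ha, ih]
  | pred i ih => rw [← sum_signedQbinom_mul_coeff_add_one hv₀ hv ha, sub_add_cancel, ih]

end Inversion

section G00

variable {v : F}

/-- The summand of the first sum of `G₀₀(w, u; p, 0)`, where `w - r` is even. -/
def evenTerm (v : F) (w p : ℤ) (u c e r : ℕ) : F :=
  v ^ (-(u : ℤ) * ((c : ℤ) + (e : ℤ)) + 2 * (c : ℤ) + 2 * (c : ℤ) * p)
    * qbinom v w (r : ℤ)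
    * qbinom (v ^ 2) ((w - (r : ℤ)) / 2 + p) (c : ℤ)
    * qbinom (v ^ 2) ((w - (r : ℤ)) / 2) (e : ℤ)

/-- The summand of the second sum of `G₀₀(w, u; p, 0)`, where `w - r` is odd. -/
def oddTerm (v : F) (w p : ℤ) (u c e r : ℕ) : F :=
  v ^ (-((u : ℤ) - 1) * ((c : ℤ) + (e : ℤ)) + 2 * (c : ℤ) * p)
    * qbinom v w (r : ℤ)
    * qbinom (v ^ 2) (1 + (w - (r : ℤ) - 1) / 2 + p) (c : ℤ)
    * qbinom (v ^ 2) ((w - (r : ℤ) - 1) / 2) (e : ℤ)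

/-- The sum `G₀₀(w, u; p, 0)` with `q` replaced by `v`. The condition `c + e + r = u` is encoded
by bounding `c` and `e` and setting `r = u - c - e`. -/
def G00 (v : F) (w p : ℤ) (u : ℕ) : F :=
  (-1) ^ w * v ^ ((u : ℤ) ^ 2 - w * (u : ℤ)) *
    ((∑ c ∈ range (u + 1), ∑ e ∈ range (u + 1 - c),
        if Even (w - ((u - c - e : ℕ) : ℤ)) then evenTerm v w p u c e (u - c - e) else 0)
      - ∑ c ∈ range (u + 1), ∑ e ∈ range (u + 1 - c),
        if ¬Even (w - ((u - c - e : ℕ) : ℤ)) then oddTerm v w p u c e (u - c - e) else 0)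

lemma mul_evenTerm (hv₀ : v ≠ 0) {w k : ℤ} {u c e r : ℕ} (hw : w = 2 * k + r)
    (hu : c + e + r = u) (p : ℤ) :
    (-1) ^ w * v ^ ((u : ℤ) ^ 2 - w * u) * evenTerm v w p u c e r =
      signedQbinom v w r * (coeff c (qbinomSeries (v ^ 2) (k + p) ((v ^ 2) ^ (1 + p - k))) *
        coeff e (qbinomSeries (v ^ 2) k ((v ^ 2) ^ (-k)))) := by
  have hsign : (-1 : F) ^ w = (-1) ^ r := by
    rw [hw, zpow_add₀ (by simp), (even_two_mul k).neg_one_zpow, one_mul, zpow_natCast]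
  have hpow : v ^ ((u : ℤ) ^ 2 - w * u) * v ^ (-(u : ℤ) * (c + e) + 2 * c + 2 * c * p) =
      v ^ (-(w - r) * r) * ((v ^ 2) ^ (1 + p - k)) ^ c * ((v ^ 2) ^ (-k)) ^ e := by
    simp only [← zpow_natCast, ← zpow_mul, ← zpow_add₀ hv₀, ← hu, hw]
    congr 1
    push_cast
    ring
  rw [evenTerm, signedQbinom, coeff_qbinomSeries, coeff_qbinomSeries, hsign,
    show (w - r) / 2 = k by omega]
  linear_combination ((-1) ^ r * qbinom v w r * qbinom (v ^ 2) (k + p) c *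
    qbinom (v ^ 2) k e) * hpow

lemma mul_oddTerm (hv₀ : v ≠ 0) {w k : ℤ} {u c e r : ℕ} (hw : w = 2 * k + 1 + r)
    (hu : c + e + r = u) (p : ℤ) :
    (-1) ^ w * v ^ ((u : ℤ) ^ 2 - w * u) * oddTerm v w p u c e r =
      -(signedQbinom v w r * (coeff c (qbinomSeries (v ^ 2) (k + p + 1) ((v ^ 2) ^ (p - k))) *
        coeff e (qbinomSeries (v ^ 2) k ((v ^ 2) ^ (-k))))) := by
  have hsign : (-1 : F) ^ w = -(-1) ^ r := by
    rw [hw, zpow_add₀ (by simp), (odd_two_mul_add_one k).neg_one_zpow, neg_one_mul, zpow_natCast]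
  have hpow : v ^ ((u : ℤ) ^ 2 - w * u) * v ^ (-((u : ℤ) - 1) * (c + e) + 2 * c * p) =
      v ^ (-(w - r) * r) * ((v ^ 2) ^ (p - k)) ^ c * ((v ^ 2) ^ (-k)) ^ e := by
    simp only [← zpow_natCast, ← zpow_mul, ← zpow_add₀ hv₀, ← hu, hw]
    congr 1
    push_cast
    ring
  rw [oddTerm, signedQbinom, coeff_qbinomSeries, coeff_qbinomSeries, hsign,
    show (w - r - 1) / 2 = k by omega, show 1 + k + p = k + p + 1 by ring]
  linear_combination (-(-1) ^ r * qbinom v w r * qbinom (v ^ 2) (k + p + 1) c *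
    qbinom (v ^ 2) k e) * hpow

lemma mul_sum_antidiagonal_evenTerm_oddTerm (hv₀ : v ≠ 0) (w p : ℤ) {u r m : ℕ}
    (hu : r + m = u) :
    (-1) ^ w * v ^ ((u : ℤ) ^ 2 - w * u) * ∑ y ∈ antidiagonal m,
        (if Even (w - r) then evenTerm v w p u y.1 y.2 r else -oddTerm v w p u y.1 y.2 r) =
      signedQbinom v w r * coeff m (splitSeries (v ^ 2) p (w - r)) := by
  obtain ⟨k, hk | hk⟩ := Int.even_or_odd' (w - r)
  · rw [hk, splitSeries_two_mul, coeff_mul, mul_sum, mul_sum]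
    refine sum_congr rfl fun y hy ↦ ?_
    rw [HasAntidiagonal.mem_antidiagonal] at hy
    rw [if_pos (even_two_mul k), mul_evenTerm hv₀ (k := k) (by omega) (by omega)]
  · rw [hk, splitSeries_two_mul_add_one, coeff_mul, mul_sum, mul_sum]
    refine sum_congr rfl fun y hy ↦ ?_
    rw [HasAntidiagonal.mem_antidiagonal] at hy
    rw [if_neg (Int.not_even_two_mul_add_one k), mul_neg, mul_oddTerm hv₀ (k := k) (by omega)
      (by omega), neg_neg]

lemma G00_eq_sum_antidiagonal (v : F) (w p : ℤ) (u : ℕ) :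
    G00 v w p u = ∑ x ∈ antidiagonal u, (-1) ^ w * v ^ ((u : ℤ) ^ 2 - w * u) *
      ∑ y ∈ antidiagonal x.2, (if Even (w - x.1) then evenTerm v w p u y.1 y.2 x.1
        else -oddTerm v w p u y.1 y.2 x.1) := by
  rw [G00, ← mul_sum, ← sum_range_sum_range_eq_sum_antidiagonal u fun c e r ↦
    if Even (w - r) then evenTerm v w p u c e r else -oddTerm v w p u c e r]
  simp only [← sum_sub_distrib]
  congr 1
  refine sum_congr rfl fun c _ ↦ sum_congr rfl fun e _ ↦ ?_
  split_ifs <;> simp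

theorem G00_closed_general (hv₀ : v ≠ 0) (hv : ¬IsOfFinOrder v) (w p : ℤ) (u : ℕ) :
    G00 v w p u = v ^ (2 * (u : ℤ) + 2 * u * p) * qbinom (v ^ 2) p u := by
  have hv₀' : v ^ 2 ≠ 0 := pow_ne_zero 2 hv₀
  have hv' : ¬IsOfFinOrder (v ^ 2) := by simpa using hv
  calc G00 v w p u
    _ = ∑ x ∈ antidiagonal u,
          signedQbinom v w x.1 * coeff x.2 (splitSeries (v ^ 2) p (w - x.1)) := by
      rw [G00_eq_sum_antidiagonal]
      exact sum_congr rfl fun x hx ↦ mul_sum_antidiagonal_evenTerm_oddTerm hv₀ w p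
        (HasAntidiagonal.mem_antidiagonal.1 hx)
    _ = coeff u (splitSeries (v ^ 2) p 0) :=
      sum_signedQbinom_mul_coeff hv₀ hv (splitSeries_add_one hv₀' hv' p) w u
    _ = v ^ (2 * (u : ℤ) + 2 * u * p) * qbinom (v ^ 2) p u := by
      rw [splitSeries_zero, coeff_qbinomSeries, mul_comm, ← zpow_natCast, ← zpow_natCast,
        ← zpow_mul, ← zpow_mul]
      congr 2
      push_cast
      ring

end G00

lemma qq_ne_zero : qq ≠ 0 :=
  RatFunc.X_ne_zero

lemma not_isOfFinOrder_ratFunc_X (K : Type*) [Field K] :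
    ¬IsOfFinOrder (RatFunc.X : RatFunc K) := by
  intro h
  obtain ⟨n, hn, hpow⟩ := isOfFinOrder_iff_pow_eq_one.1 h
  have hintegral : IsIntegral K (RatFunc.X : RatFunc K) :=
    .of_pow hn (hpow ▸ isIntegral_one)
  exact RatFunc.transcendental_X hintegral.isAlgebraic

lemma not_isOfFinOrder_qq : ¬IsOfFinOrder qq :=
  not_isOfFinOrder_ratFunc_X ℚ

/-- The identity [CLW, (5.7)]: a closed evaluation of `G₀₀(w,u;p1,0)`. -/
theorem G00_closed (w p1 : ℤ) (u : ℕ) :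
    (-1 : F) ^ w * qq ^ ((u : ℤ) ^ 2 - w * (u : ℤ)) *
    ((∑ c ∈ range (u + 1), ∑ e ∈ range (u + 1 - c),
        (let r : ℕ := u - c - e;
         if Even (w - (r : ℤ)) then
           qq ^ (-(u : ℤ) * ((c : ℤ) + (e : ℤ)) + 2 * (c : ℤ) + 2 * (c : ℤ) * p1)
             * qbinom qq w (r : ℤ)
             * qbinom (qq ^ 2) ((w - (r : ℤ)) / 2 + p1) (c : ℤ)
             * qbinom (qq ^ 2) ((w - (r : ℤ)) / 2) (e : ℤ)
         else 0))
     - (∑ c ∈ range (u + 1), ∑ e ∈ range (u + 1 - c),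
        (let r : ℕ := u - c - e;
         if ¬ Even (w - (r : ℤ)) then
           qq ^ (-((u : ℤ) - 1) * ((c : ℤ) + (e : ℤ)) + 2 * (c : ℤ) * p1)
             * qbinom qq w (r : ℤ)
             * qbinom (qq ^ 2) (1 + (w - (r : ℤ) - 1) / 2 + p1) (c : ℤ)
             * qbinom (qq ^ 2) ((w - (r : ℤ) - 1) / 2) (e : ℤ)
         else 0)))
    = qq ^ (2 * (u : ℤ) + 2 * (u : ℤ) * p1) * qbinom (qq ^ 2) p1 (u : ℤ) :=
  G00_closed_general qq_ne_zero not_isOfFinOrder_qq w p1 u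

end
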